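/- (Wick's theorem) For every natural number n, every real number α > 0, every symmetric positive-definite real n×n matrix Q, every k ∈ ℕ, and every choice of indices μ₁,…,μ_{2k} ∈ {1,…,n}, the normalized Gaussian moment satisfies ⟨x^{μ₁} x^{μ₂} ⋯ x^{μ_{2k}}⟩ = (1/(2^k · k! · α^k)) · ∑_{P ∈ S_{2k}} (Q⁻¹)^{μ_{P(1)} μ_{P(2)}} · (Q⁻¹)^{μ_{P(3)} μ_{P(4)}} ⋯ (Q⁻¹)^{μ_{P(2k−1)} μ_{P(2k)}}, where the sum runs over all permutations P of {1,…,2k}. -/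

import Mathlib

open MeasureTheory

/-- The Gaussian weight. -/
noncomputable def gw {n : ℕ} (α : ℝ) (Q : Matrix (Fin n) (Fin n) ℝ) (x : Fin n → ℝ) : ℝ :=
  Real.exp (-(α / 2) * ∑ a, ∑ b, Q a b * x a * x b)

lemma quad_lower {n : ℕ} (Q : Matrix (Fin n) (Fin n) ℝ) (hQ : Q.PosDef) :
    ∃ c : ℝ, 0 < c ∧ ∀ x : Fin n → ℝ, c * ∑ a, x a ^ 2 ≤ ∑ a, ∑ b, Q a b * x a * x b := by
  have hpos : ∀ x : Fin n → ℝ, x ≠ 0 → 0 < ∑ a, ∑ b, Q a b * x a * x b := by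
    intro x hx
    have := hQ.dotProduct_mulVec_pos hx
    simp only [dotProduct, Matrix.mulVec, Finset.mul_sum, star_trivial] at this
    refine this.trans_eq (Finset.sum_congr rfl fun a _ => Finset.sum_congr rfl fun b _ => ?_)
    ring
  rcases Nat.eq_zero_or_pos n with rfl | hn
  · exact ⟨1, one_pos, fun x => by simp⟩
  have : Nonempty (Fin n) := ⟨⟨0, hn⟩⟩
  have hcomp : IsCompact (Metric.sphere (0 : Fin n → ℝ) 1) := isCompact_sphere _ _
  have hne : (Metric.sphere (0 : Fin n → ℝ) 1).Nonempty :=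
    NormedSpace.sphere_nonempty.2 zero_le_one
  have hcont : Continuous (fun x : Fin n → ℝ => ∑ a, ∑ b, Q a b * x a * x b) := by fun_prop
  obtain ⟨y, hy, hmin⟩ := hcomp.exists_isMinOn hne hcont.continuousOn
  have hy0 : y ≠ 0 := by
    rintro rfl
    simp at hy
  have hn' : (0 : ℝ) < n := by exact_mod_cast hn
  refine ⟨(∑ a, ∑ b, Q a b * y a * y b) / n, div_pos (hpos y hy0) hn', fun x => ?_⟩
  have hsq : ∑ a, x a ^ 2 ≤ n * ‖x‖ ^ 2 := by
    calc ∑ a, x a ^ 2 ≤ ∑ _a : Fin n, ‖x‖ ^ 2 := by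
          refine Finset.sum_le_sum fun a _ => ?_
          rw [← sq_abs]
          have := norm_le_pi_norm x a
          rw [Real.norm_eq_abs] at this
          gcongr
      _ = n * ‖x‖ ^ 2 := by simp
  have hscale : (∑ a, ∑ b, Q a b * y a * y b) * ‖x‖ ^ 2 ≤ ∑ a, ∑ b, Q a b * x a * x b := by
    by_cases hx : x = 0
    · simp [hx]
    have hxn : ‖x‖ ≠ 0 := norm_ne_zero_iff.2 hx
    have h1 := hmin (a := ‖x‖⁻¹ • x) (by simp [norm_smul, hxn])
    simp only [Set.mem_ofPred_eq, Pi.smul_apply, smul_eq_mul] at h1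
    have h2 : ∑ a, ∑ b, Q a b * (‖x‖⁻¹ * x a) * (‖x‖⁻¹ * x b)
        = (‖x‖ ^ 2)⁻¹ * ∑ a, ∑ b, Q a b * x a * x b := by
      simp only [Finset.mul_sum]
      refine Finset.sum_congr rfl fun a _ => Finset.sum_congr rfl fun b _ => ?_
      field_simp
    rw [h2] at h1
    have h3 : 0 < ‖x‖ ^ 2 := by positivity
    calc _ ≤ ((‖x‖ ^ 2)⁻¹ * ∑ a, ∑ b, Q a b * x a * x b) * ‖x‖ ^ 2 := by gcongr
      _ = _ := by field_simp
  have hp := hpos y hy0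
  calc _ ≤ (∑ a, ∑ b, Q a b * y a * y b) / n * (n * ‖x‖ ^ 2) := by gcongr
    _ = (∑ a, ∑ b, Q a b * y a * y b) * ‖x‖ ^ 2 := by field_simp
    _ ≤ _ := hscale

lemma gw_cont {n : ℕ} (α : ℝ) (Q : Matrix (Fin n) (Fin n) ℝ) : Continuous (gw α Q) := by
  unfold gw; fun_prop

lemma gw_integrable {n : ℕ} (α : ℝ) (hα : 0 < α) (Q : Matrix (Fin n) (Fin n) ℝ) (hQ : Q.PosDef)
    {m : ℕ} (μ : Fin m → Fin n) :
    Integrable (fun x : Fin n → ℝ => (∏ i, x (μ i)) * gw α Q x) := by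
  obtain ⟨c, hc, hq⟩ := quad_lower Q hQ
  have hb : 0 < α / 2 * c := by positivity
  have h1 : ∀ p : ℕ, Integrable (fun t : ℝ => t ^ p * Real.exp (-(α / 2 * c) * t ^ 2)) := by
    intro p
    have := integrable_rpow_mul_exp_neg_mul_sq hb (s := p) (by
      have : (0 : ℝ) ≤ p := Nat.cast_nonneg p
      linarith)
    simpa only [Real.rpow_natCast] using this
  have h2 : Integrable (fun x : Fin n → ℝ => ∏ a,
      (x a ^ (Finset.univ.filter (fun i => μ i = a)).card * Real.exp (-(α / 2 * c) * x a ^ 2))) :=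
    Integrable.fintype_prod
      (f := fun a t => t ^ (Finset.univ.filter (fun i => μ i = a)).card *
        Real.exp (-(α / 2 * c) * t ^ 2)) (fun a => h1 _)
  refine h2.mono ?_ (Filter.Eventually.of_forall fun x => ?_)
  · have := gw_cont α Q
    exact Continuous.aestronglyMeasurable (by fun_prop)
  · have h3 : ∏ a, x a ^ (Finset.univ.filter (fun i => μ i = a)).card = ∏ i, x (μ i) := by
      rw [← Finset.prod_fiberwise' Finset.univ μ x]
      simp
    rw [Finset.prod_mul_distrib, h3, norm_mul, norm_mul, ← Real.exp_sum]
    gcongr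
    rw [gw, Real.norm_eq_abs, Real.norm_eq_abs, Real.abs_exp, Real.abs_exp, Real.exp_le_exp,
      ← Finset.mul_sum]
    have := mul_le_mul_of_nonneg_left (hq x) (by positivity : 0 ≤ α / 2)
    linarith

/-- Gaussian moments (unnormalized). -/
noncomputable def gm {n : ℕ} (α : ℝ) (Q : Matrix (Fin n) (Fin n) ℝ) {m : ℕ}
    (μ : Fin m → Fin n) : ℝ := ∫ x : Fin n → ℝ, (∏ i, x (μ i)) * gw α Q x

lemma gm_perm {n : ℕ} (α : ℝ) (Q : Matrix (Fin n) (Fin n) ℝ) {m : ℕ}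
    (μ : Fin m → Fin n) (P : Equiv.Perm (Fin m)) : gm α Q (μ ∘ P) = gm α Q μ := by
  unfold gm
  congr 1
  ext x
  rw [← Equiv.prod_comp P (fun i => x (μ i))]
  rfl

lemma gw_deriv {n : ℕ} (α : ℝ) (Q : Matrix (Fin n) (Fin n) ℝ) (hQs : Q.IsSymm)
    (x v : Fin n → ℝ) :
    HasLineDerivAt ℝ (gw α Q) (-α * (∑ a, (Q.mulVec v) a * x a) * gw α Q x) x v := by
  unfold HasLineDerivAt gw
  have hc : ∀ a, HasDerivAt (fun t : ℝ => (x + t • v) a) (v a) 0 := by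
    intro a
    simpa using ((hasDerivAt_id (0 : ℝ)).mul_const (v a)).const_add (x a)
  have h := ((HasDerivAt.fun_sum (u := Finset.univ) fun a _ =>
    HasDerivAt.fun_sum (u := Finset.univ) fun b _ =>
      ((hc a).const_mul (Q a b)).mul (hc b)).const_mul (-(α / 2))).exp
  refine h.congr_deriv ?_
  simp only [zero_smul, add_zero]
  have key : ∑ a, ∑ b, (Q a b * v a * x b + Q a b * x a * v b)
      = 2 * ∑ a, (Q.mulVec v) a * x a := by
    simp only [Finset.sum_add_distrib, Matrix.mulVec, dotProduct, two_mul]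
    congr 1
    · rw [Finset.sum_comm]
      refine Finset.sum_congr rfl fun a _ => ?_
      rw [Finset.sum_mul]
      refine Finset.sum_congr rfl fun b _ => ?_
      rw [hQs.apply]
    · refine Finset.sum_congr rfl fun a _ => ?_
      rw [Finset.sum_mul]
      refine Finset.sum_congr rfl fun b _ => ?_
      ring
  simp only [Pi.mul_apply] at *
  have h0 : x + (0 : ℝ) • v = x := by simp
  simp only [h0]
  rw [key]
  ring

lemma mono_deriv {n m : ℕ} (ν : Fin (m + 1) → Fin n) (x v : Fin n → ℝ) :
    HasLineDerivAt ℝ (fun x : Fin n → ℝ => ∏ i, x (ν i))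
      (∑ j, v (ν j) * ∏ i, x (ν (j.succAbove i))) x v := by
  unfold HasLineDerivAt
  have hc : ∀ a, HasDerivAt (fun t : ℝ => (x + t • v) a) (v a) 0 := by
    intro a
    simpa using ((hasDerivAt_id (0 : ℝ)).mul_const (v a)).const_add (x a)
  have h := HasDerivAt.fun_finsetProd (u := Finset.univ) (fun i _ => hc (ν i))
  refine h.congr_deriv ?_
  refine Finset.sum_congr rfl fun j _ => ?_
  rw [Fin.univ_succAbove m j, Finset.erase_cons, Finset.prod_map]
  simp [mul_comm]

lemma gm_rec {n : ℕ} (α : ℝ) (hα : 0 < α) (Q : Matrix (Fin n) (Fin n) ℝ)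
    (hQs : Q.IsSymm) (hQ : Q.PosDef) {m : ℕ} (μ : Fin (m + 2) → Fin n) :
    gm α Q μ = α⁻¹ * ∑ j : Fin (m + 1), Q⁻¹ (μ 0) (μ j.succ) *
      gm α Q (fun i => μ (j.succAbove i).succ) := by
  have hdet : IsUnit Q.det := (Matrix.isUnit_iff_isUnit_det Q).1 hQ.isUnit
  set v : Fin n → ℝ := fun b => Q⁻¹ (μ 0) b with hv
  have hsinv : Q⁻¹.IsSymm := by
    rw [Matrix.IsSymm, Matrix.transpose_nonsing_inv, hQs]
  have hQv : Q.mulVec v = Pi.single (μ 0) 1 := by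
    ext a
    have h1 : Q.mulVec v a = (Q * Q⁻¹) a (μ 0) := by
      rw [Matrix.mul_apply]
      simp only [Matrix.mulVec, dotProduct, hv]
      refine Finset.sum_congr rfl fun b _ => ?_
      rw [hsinv.apply]
    rw [h1, Matrix.mul_nonsing_inv _ hdet, Matrix.one_apply, Pi.single_apply]
  have hlin : ∀ x : Fin n → ℝ, ∑ a, (Q.mulVec v) a * x a = x (μ 0) := by
    intro x
    simp [hQv, Pi.single_apply]
  set f : (Fin n → ℝ) → ℝ := fun x => ∏ i : Fin (m + 1), x (μ i.succ)
  set f' : (Fin n → ℝ) → ℝ := fun x => ∑ j : Fin (m + 1), v (μ j.succ) *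
    ∏ i, x (μ (j.succAbove i).succ)
  set g' : (Fin n → ℝ) → ℝ := fun x => -α * x (μ 0) * gw α Q x
  have hint : ∀ j : Fin (m + 1), Integrable (fun x : Fin n → ℝ => v (μ j.succ) *
      ((∏ i, x (μ (j.succAbove i).succ)) * gw α Q x)) := fun j =>
    (gw_integrable α hα Q hQ _).const_mul _
  have e1 : (fun x => f' x * gw α Q x) = fun x : Fin n → ℝ => ∑ j : Fin (m + 1), v (μ j.succ) *
      ((∏ i, x (μ (j.succAbove i).succ)) * gw α Q x) := by
    ext x
    simp only [f', Finset.sum_mul, mul_assoc]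
  have e2 : (fun x => f x * g' x) = fun x : Fin n → ℝ => -α * ((∏ i, x (μ i)) * gw α Q x) := by
    ext x
    simp only [f, g', Fin.prod_univ_succ (fun i => x (μ i))]
    ring
  have key := integral_bilinear_hasLineDerivAt_right_eq_neg_left_of_integrable
    (μ := (volume : Measure (Fin n → ℝ))) (f := f) (f' := f') (g := gw α Q) (g' := g') (v := v)
    (B := ContinuousLinearMap.mul ℝ ℝ)
    (by
      simp only [ContinuousLinearMap.mul_apply']
      rw [e1]
      exact integrable_finsetSum _ fun j _ => hint j)
    (by
      simp only [ContinuousLinearMap.mul_apply']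
      rw [e2]
      exact (gw_integrable α hα Q hQ _).const_mul _)
    (by
      simp only [ContinuousLinearMap.mul_apply']
      exact gw_integrable α hα Q hQ _)
    (fun x _ => mono_deriv (fun i => μ i.succ) x v)
    (fun x _ => by
      have := gw_deriv α Q hQs x v
      rwa [hlin] at this)
  simp only [ContinuousLinearMap.mul_apply'] at key
  rw [e1, e2, integral_const_mul, integral_finsetSum _ (fun j _ => hint j)] at key
  simp only [integral_const_mul] at key
  unfold gm
  rw [eq_inv_mul_iff_mul_eq₀ hα.ne']
  linarith

lemma sum_perm_pull {m : ℕ} (j : Fin (m + 1)) :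
    ∃ σ : Equiv.Perm (Fin (m + 2)), σ 0 = 0 ∧ σ 1 = j.succ ∧
      ∀ i : Fin m, σ i.succ.succ = (j.succAbove i).succ := by
  refine ⟨Equiv.Perm.decomposeFin.symm (0, j.cycleRange.symm), ?_, ?_, ?_⟩
  · simp
  · simp
  · intro i
    simp

lemma ext_perm {m : ℕ} (R : Equiv.Perm (Fin m)) :
    ∃ σ : Equiv.Perm (Fin (m + 2)), σ 0 = 0 ∧ σ 1 = 1 ∧
      ∀ i : Fin m, σ i.succ.succ = (R i).succ.succ := by
  refine ⟨Equiv.Perm.decomposeFin.symm (0, Equiv.Perm.decomposeFin.symm (0, R)), ?_, ?_, ?_⟩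
  · simp
  · simp
  · intro i
    simp

lemma gm_sym {n : ℕ} (α : ℝ) (hα : 0 < α) (Q : Matrix (Fin n) (Fin n) ℝ)
    (hQs : Q.IsSymm) (hQ : Q.PosDef) {m : ℕ} (μ : Fin (m + 2) → Fin n) :
    ((m + 2).factorial : ℝ) * gm α Q μ = α⁻¹ * ((m + 1 : ℕ) *
      ∑ P : Equiv.Perm (Fin (m + 2)), Q⁻¹ (μ (P 0)) (μ (P 1)) *
        gm α Q (fun i : Fin m => μ (P i.succ.succ))) := by
  have h1 : ((m + 2).factorial : ℝ) * gm α Q μ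
      = ∑ P : Equiv.Perm (Fin (m + 2)), gm α Q (μ ∘ P) := by
    simp [gm_perm, Fintype.card_perm]
  rw [h1]
  simp_rw [gm_rec α hα Q hQs hQ]
  rw [← Finset.mul_sum, Finset.sum_comm]
  congr 1
  have : ∀ j : Fin (m + 1), ∑ P : Equiv.Perm (Fin (m + 2)), Q⁻¹ ((μ ∘ P) 0) ((μ ∘ P) j.succ) *
      gm α Q (fun i => (μ ∘ P) (j.succAbove i).succ) =
      ∑ P : Equiv.Perm (Fin (m + 2)), Q⁻¹ (μ (P 0)) (μ (P 1)) *
        gm α Q (fun i : Fin m => μ (P i.succ.succ)) := by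
    intro j
    obtain ⟨σ, h0, h1, h2⟩ := sum_perm_pull j
    rw [← Equiv.sum_comp (Equiv.mulRight σ) (fun P : Equiv.Perm (Fin (m + 2)) =>
      Q⁻¹ (μ (P 0)) (μ (P 1)) * gm α Q (fun i : Fin m => μ (P i.succ.succ)))]
    simp [h0, h1, h2]
  rw [Finset.sum_congr rfl fun j _ => this j]
  simp

lemma ev_lt {k : ℕ} (j : Fin k) : 2 * (j : ℕ) < 2 * k := by
  have := j.isLt
  omega

lemma od_lt {k : ℕ} (j : Fin k) : 2 * (j : ℕ) + 1 < 2 * k := by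
  have := j.isLt
  omega

/-- The permutation sum. -/
noncomputable def wsum {n : ℕ} (C : Matrix (Fin n) (Fin n) ℝ) (k : ℕ)
    (μ : Fin (2 * k) → Fin n) : ℝ :=
  ∑ P : Equiv.Perm (Fin (2 * k)), ∏ j : Fin k,
        C (μ (P ⟨2 * (j : ℕ), ev_lt j⟩))
            (μ (P ⟨2 * (j : ℕ) + 1, od_lt j⟩))

lemma wsum_rec {n : ℕ} (C : Matrix (Fin n) (Fin n) ℝ) (k : ℕ)
    (μ : Fin (2 * k + 2) → Fin n) :
    ∑ P : Equiv.Perm (Fin (2 * k + 2)), C (μ (P 0)) (μ (P 1)) *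
        wsum C k (fun i => μ (P i.succ.succ)) = ((2 * k).factorial : ℝ) * wsum C (k + 1) μ := by
  unfold wsum
  simp_rw [Finset.mul_sum]
  rw [Finset.sum_comm]
  have : ∀ R : Equiv.Perm (Fin (2 * k)), ∑ P : Equiv.Perm (Fin (2 * k + 2)),
      C (μ (P 0)) (μ (P 1)) * ∏ j : Fin k,
        C (μ (P (R ⟨2 * (j : ℕ), ev_lt j⟩).succ.succ))
          (μ (P (R ⟨2 * (j : ℕ) + 1, od_lt j⟩).succ.succ)) =
      ∑ P : Equiv.Perm (Fin (2 * k + 2)), ∏ j : Fin (k + 1),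
        C (μ (P ⟨2 * (j : ℕ), ev_lt j⟩))
            (μ (P ⟨2 * (j : ℕ) + 1, od_lt j⟩)) := by
    intro R
    obtain ⟨σ, h0, h1, h2⟩ := ext_perm R
    rw [← Equiv.sum_comp (Equiv.mulRight σ) (fun P : Equiv.Perm (Fin (2 * k + 2)) =>
      ∏ j : Fin (k + 1), C (μ (P ⟨2 * (j : ℕ), ev_lt j⟩))
            (μ (P ⟨2 * (j : ℕ) + 1, od_lt j⟩)))]
    refine Finset.sum_congr rfl fun P _ => ?_
    rw [Fin.prod_univ_succ]
    simp only [Equiv.coe_mulRight, Equiv.Perm.mul_apply, ← h2]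
    congr 1
    conv_lhs => rw [← h0, ← h1]
    rfl
  rw [Finset.sum_congr rfl fun R _ => this R]
  simp only [Finset.sum_const, Finset.card_univ, Fintype.card_perm, Fintype.card_fin,
    nsmul_eq_mul]
  rw [Finset.mul_sum]
  rfl

lemma gm_wick {n : ℕ} (α : ℝ) (hα : 0 < α) (Q : Matrix (Fin n) (Fin n) ℝ)
    (hQs : Q.IsSymm) (hQ : Q.PosDef) (k : ℕ) : ∀ μ : Fin (2 * k) → Fin n,
    gm α Q μ = (1 / ((2 : ℝ) ^ k * (Nat.factorial k : ℝ) * α ^ k)) * wsum Q⁻¹ k μ *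
      ∫ x : Fin n → ℝ, gw α Q x := by
  induction k with
  | zero =>
    intro μ
    have h : wsum Q⁻¹ 0 μ = 1 := by
      unfold wsum
      simp only [Finset.univ_eq_empty, Finset.prod_empty, Finset.sum_const, Finset.card_univ,
        Fintype.card_perm, Fintype.card_fin]
      simp
    rw [h]
    unfold gm
    simp
  | succ k ih =>
    intro μ
    have h := gm_sym α hα Q hQs hQ (m := 2 * k) μ
    simp_rw [ih] at h
    have h2 := wsum_rec Q⁻¹ k μ
    set Z := ∫ x : Fin n → ℝ, gw α Q x
    have h3 : ∑ P : Equiv.Perm (Fin (2 * k + 2)), Q⁻¹ (μ (P 0)) (μ (P 1)) *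
        (1 / ((2 : ℝ) ^ k * (Nat.factorial k : ℝ) * α ^ k) *
          wsum Q⁻¹ k (fun i => μ (P i.succ.succ)) * Z) =
        1 / ((2 : ℝ) ^ k * (Nat.factorial k : ℝ) * α ^ k) * Z *
          (((2 * k).factorial : ℝ) * wsum Q⁻¹ (k + 1) μ) := by
      rw [← h2, Finset.mul_sum]
      refine Finset.sum_congr rfl fun P _ => ?_
      ring
    have h4 := h.trans (congrArg (fun t => α⁻¹ * (((2 * k + 1 : ℕ) : ℝ) * t)) h3)
    have hf : ((2 * k).factorial : ℝ) ≠ 0 := by positivity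
    have hk : (k.factorial : ℝ) ≠ 0 := by positivity
    rw [Nat.factorial_succ (2 * k + 1), Nat.factorial_succ (2 * k)] at h4
    have hA : (((2 * k + 1 + 1) * ((2 * k + 1) * (2 * k).factorial) : ℕ) : ℝ) ≠ 0 := by positivity
    apply mul_left_cancel₀ hA
    refine h4.trans ?_
    rw [Nat.factorial_succ k]
    push_cast
    field_simp
    ring

/-- Wick's theorem: the Gaussian moment of order `2k` is
`⟨x^{μ₁} ⋯ x^{μ_{2k}}⟩ = (1/(2^k k! α^k)) ∑_{P ∈ S_{2k}}
  (Q⁻¹)^{μ_{P(1)} μ_{P(2)}} ⋯ (Q⁻¹)^{μ_{P(2k-1)} μ_{P(2k)}}`. -/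
theorem gaussian_wick_theorem
    (n : ℕ) (α : ℝ) (hα : 0 < α) (Q : Matrix (Fin n) (Fin n) ℝ)
    (hQsymm : Q.IsSymm) (hQ : Q.PosDef)
    (k : ℕ) (μ : Fin (2 * k) → Fin n) :
    (∫ x : Fin n → ℝ, Real.exp (-(α / 2) * ∑ a, ∑ b, Q a b * x a * x b))⁻¹ *
      (∫ x : Fin n → ℝ,
        (∏ i, x (μ i)) * Real.exp (-(α / 2) * ∑ a, ∑ b, Q a b * x a * x b))
    = (1 / ((2 : ℝ) ^ k * (Nat.factorial k : ℝ) * α ^ k)) *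
      ∑ P : Equiv.Perm (Fin (2 * k)), ∏ j : Fin k,
        Q⁻¹ (μ (P ⟨2 * (j : ℕ), by have := j.isLt; omega⟩))
            (μ (P ⟨2 * (j : ℕ) + 1, by have := j.isLt; omega⟩)) := by
  have h := gm_wick α hα Q hQsymm hQ k μ
  have hZ : 0 < ∫ x : Fin n → ℝ, gw α Q x := by
    have := gw_integrable α hα Q hQ (m := 0) Fin.elim0
    simp only [Finset.univ_eq_empty, Finset.prod_empty, one_mul] at this
    exact integral_exp_pos this
  change (∫ x : Fin n → ℝ, gw α Q x)⁻¹ * gm α Q μ = _ * wsum Q⁻¹ k μ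
  rw [h]
  field_simp
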